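/- Let X be a variety over an algebraically closed field k, V a finite-dimensional k-vector space (with its Zariski topology), and F a Zariski-closed subset of X × V such that for every x ∈ X the fibre F_x = {v ∈ V : (x,v) ∈ F} is a cone in V (i.e. contains 0 and is closed under multiplication by scalars in k). Then the function X → ℤ sending x to dim F_x is upper semicontinuous, i.e. {x ∈ X : dim F_x ≤ n} is open in X for every n. -/

import Mathlib

/-!
A closed cone `C` has dimension at most `N` if and only if some `N` linear forms have no common
zero on `C` other than the origin. If such forms exist, the Nullstellensatz and the graded Nakayama
lemma make the coordinate ring of `C` finite over a polynomial ring in `N` variables; conversely,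
a linear form that vanishes identically on no irreducible component of `C` other than the origin
cuts the dimension down by one, so `N` successive cuts leave a finite set, and a finite cone
contains only the origin.

For fixed linear forms and varying `x`, having no common zero on `F_x` other than the origin is an
open condition on `x`, by elimination theory: again by the Nullstellensatz, all monomials of some
degree `d` lie in the homogeneous ideal cutting out these zeros at `x₀`, and by Nakayama's lemma
they still do after inverting a single function that is nonzero at `x₀`. Hence `{dim F_x ≤ N}` is a
union of open sets.
-/

open MvPolynomial

noncomputable section

namespace Stmt9

/-- The Zariski topology on `ι → k`: closed sets are the zero loci of sets of polynomials. -/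
def zariskiTopology (k : Type) [Field k] (ι : Type) : TopologicalSpace (ι → k) :=
  TopologicalSpace.ofClosed
    {Z | ∃ S : Set (MvPolynomial ι k), Z = {x | ∀ p ∈ S, eval x p = 0}}
    ⟨{1}, by ext x; simp⟩
    (fun F hF => by
      choose S hS using fun Z (h : Z ∈ F) => hF h
      refine ⟨⋃ (Z : Set (ι → k)) (h : Z ∈ F), S Z h, ?_⟩
      ext x
      simp only [Set.mem_sInter, Set.mem_setOf_eq, Set.mem_iUnion]
      constructor
      · intro hx p hp
        obtain ⟨Z, hZ, hpZ⟩ := hp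
        have := hx Z hZ
        rw [hS Z hZ] at this
        exact this p hpZ
      · intro hx Z hZ
        rw [hS Z hZ]
        exact fun p hp => hx p ⟨Z, hZ, hp⟩)
    (fun Z₁ h₁ Z₂ h₂ => by
      obtain ⟨S, rfl⟩ := h₁
      obtain ⟨T, rfl⟩ := h₂
      refine ⟨Set.image2 (· * ·) S T, ?_⟩
      ext x
      simp only [Set.mem_union, Set.mem_setOf_eq, Set.mem_image2]
      constructor
      · rintro (h | h) q ⟨p, hp, r, hr, rfl⟩
        · rw [_root_.map_mul, h p hp, zero_mul]
        · rw [_root_.map_mul, h r hr, mul_zero]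
      · intro h
        by_contra hc
        push_neg at hc
        obtain ⟨⟨p, hp, hpx⟩, ⟨q, hq, hqx⟩⟩ := hc
        exact mul_ne_zero hpx hqx (by rw [← _root_.map_mul]; exact h _ ⟨p, hp, q, hq, rfl⟩))


open scoped LinearAlgebra.Projectivization

variable (k : Type) [Field k]

/-- The Zariski topology on projective `n`-space over `k`, as the quotient topology of the
Zariski topology on the set of nonzero vectors. -/
instance projTopology (n : ℕ) : TopologicalSpace (ℙ k (Fin (n + 1) → k)) :=
  ((zariskiTopology k (Fin (n + 1))).induced
    (Subtype.val : {v : Fin (n + 1) → k // v ≠ 0} → (Fin (n + 1) → k))).coinduced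
      (Projectivization.mk' k)

/-- The Zariski topology on the product of projective `n`-space with the affine space
`ι → k`, again realized as a quotient of the Zariski topology upstairs. -/
def projProdTopology (n : ℕ) (ι : Type) :
    TopologicalSpace (ℙ k (Fin (n + 1) → k) × (ι → k)) :=
  ((zariskiTopology k (Fin (n + 1) ⊕ ι)).induced
    (fun p : {v : Fin (n + 1) → k // v ≠ 0} × (ι → k) =>
      Sum.elim (p.1 : Fin (n + 1) → k) p.2)).coinduced
    (fun p => (Projectivization.mk' k p.1, p.2))

section Homogeneous

variable {R S ι : Type*}

lemma map_homogeneousComponent [CommSemiring R] [CommSemiring S] (f : R →+* S) (n : ℕ)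
    (p : MvPolynomial ι R) :
    map f (homogeneousComponent n p) = homogeneousComponent n (map f p) := by
  ext t
  simp only [coeff_map, coeff_homogeneousComponent, apply_ite f, map_zero]

lemma eval_smul_of_isHomogeneous [CommSemiring R] {p : MvPolynomial ι R} {n : ℕ}
    (hp : p.IsHomogeneous n) (c : R) (v : ι → R) : eval (c • v) p = c ^ n * eval v p := by
  rw [eval_eq, eval_eq, Finset.mul_sum]
  refine Finset.sum_congr rfl fun t ht => ?_
  have ht_degree : ∑ i ∈ t.support, t i = n := by
    rw [← Finsupp.degree_apply, Finsupp.degree_eq_weight_one]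
    exact hp (mem_support_iff.mp ht)
  simp only [Pi.smul_apply, smul_eq_mul, mul_pow, Finset.prod_mul_distrib,
    Finset.prod_pow_eq_pow_sum, ht_degree]
  ring

lemma eval_smul_eq_sum_homogeneousComponent [CommSemiring R] (p : MvPolynomial ι R) (c : R)
    (v : ι → R) :
    eval (c • v) p =
      ∑ n ∈ Finset.range (p.totalDegree + 1), c ^ n * eval v (homogeneousComponent n p) := by
  conv_lhs => rw [← sum_homogeneousComponent p, map_sum]
  exact Finset.sum_congr rfl fun n _ =>
    eval_smul_of_isHomogeneous (homogeneousComponent_isHomogeneous n p) c v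

lemma forall_eval_smul_eq_zero_iff [CommRing R] [IsDomain R] [Infinite R] {p : MvPolynomial ι R}
    {v : ι → R} :
    (∀ c : R, eval (c • v) p = 0) ↔ ∀ n, eval v (homogeneousComponent n p) = 0 := by
  refine ⟨fun h n => ?_, fun h c => by simp [eval_smul_eq_sum_homogeneousComponent, h]⟩
  let f : Polynomial R := ∑ i ∈ Finset.range (p.totalDegree + 1),
    Polynomial.monomial i (eval v (homogeneousComponent i p))
  have hf : f = 0 := Polynomial.funext fun c => by
    simpa [f, Polynomial.eval_finsetSum, eval_smul_eq_sum_homogeneousComponent, mul_comm] using h c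
  rcases lt_or_ge p.totalDegree n with hn | hn
  · rw [homogeneousComponent_eq_zero n p hn, map_zero]
  · have hcoeff : f.coeff n = eval v (homogeneousComponent n p) := by
      simp [f, Polynomial.finsetSum_coeff, Polynomial.coeff_monomial, hn]
    rw [← hcoeff, hf, Polynomial.coeff_zero]

variable [CommRing R]

attribute [local instance] MvPolynomial.gradedAlgebra

lemma homogeneousComponent_mul_of_isHomogeneous {p : MvPolynomial ι R} {e : ℕ}
    (hp : p.IsHomogeneous e) (q : MvPolynomial ι R) (n : ℕ) :
    homogeneousComponent n (q * p) = if e ≤ n then homogeneousComponent (n - e) q * p else 0 := by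
  simp only [← decomposition.decompose'_apply]
  exact DirectSum.coe_decompose_mul_of_right_mem (homogeneousSubmodule ι R) n hp

lemma mk_homogeneousComponent_mem {κ : Type*} {J : Ideal (MvPolynomial ι R)}
    (hJ : J.IsHomogeneous (homogeneousSubmodule ι R)) {L : κ → MvPolynomial ι R} {e : κ → ℕ}
    (hL : ∀ i, (L i).IsHomogeneous (e i)) (he : ∀ i, e i ≠ 0)
    (M : AddSubmonoid (MvPolynomial ι R ⧸ J))
    (hLM : ∀ i, ∀ b ∈ M, Ideal.Quotient.mk J (L i) * b ∈ M) {n : ℕ}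
    (hlow : ∀ m < n, ∀ q : MvPolynomial ι R, q.IsHomogeneous m → Ideal.Quotient.mk J q ∈ M)
    {p : MvPolynomial ι R} (hp : p ∈ J ⊔ Ideal.span (Set.range L)) :
    Ideal.Quotient.mk J (homogeneousComponent n p) ∈ M := by
  obtain ⟨a, ha, b, hb, rfl⟩ := Submodule.mem_sup.mp hp
  obtain ⟨g, rfl⟩ := Finsupp.mem_ideal_span_range_iff_exists_finsupp.mp hb
  have ha_mk : Ideal.Quotient.mk J (homogeneousComponent n a) = 0 :=
    Ideal.Quotient.eq_zero_iff_mem.mpr (homogeneousComponent_mem_of_mem hJ ha n)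
  rw [map_add, map_add, ha_mk, zero_add, Finsupp.sum, map_sum, map_sum]
  refine AddSubmonoid.sum_mem M fun i _ => ?_
  rw [homogeneousComponent_mul_of_isHomogeneous (hL i)]
  split_ifs with hi
  · rw [mul_comm, map_mul]
    have : n - e i < n := by have := he i; omega
    exact hLM i _ (hlow _ this _ (homogeneousComponent_isHomogeneous _ _))
  · rw [map_zero]
    exact M.zero_mem

lemma mk_mem_of_pow_idealOfVars_le {κ : Type*} {J : Ideal (MvPolynomial ι R)}
    (hJ : J.IsHomogeneous (homogeneousSubmodule ι R)) {L : κ → MvPolynomial ι R} {e : κ → ℕ}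
    (hL : ∀ i, (L i).IsHomogeneous (e i)) (he : ∀ i, e i ≠ 0) {d : ℕ}
    (hd : idealOfVars ι R ^ d ≤ J ⊔ Ideal.span (Set.range L))
    (M : AddSubmonoid (MvPolynomial ι R ⧸ J))
    (hLM : ∀ i, ∀ b ∈ M, Ideal.Quotient.mk J (L i) * b ∈ M)
    (hmonomial : ∀ t : ι →₀ ℕ, t.degree < d → ∀ c : R, Ideal.Quotient.mk J (monomial t c) ∈ M)
    (b : MvPolynomial ι R ⧸ J) : b ∈ M := by
  have hhomogeneous : ∀ n, ∀ p : MvPolynomial ι R, p.IsHomogeneous n →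
      Ideal.Quotient.mk J p ∈ M := by
    intro n
    induction n using Nat.strong_induction_on with
    | _ n ih =>
      intro p hp
      have hdegree : ∀ t ∈ p.support, t.degree = n := fun t ht => by
        rw [Finsupp.degree_eq_weight_one]
        exact hp (mem_support_iff.mp ht)
      rcases lt_or_ge n d with hn | hn
      · rw [p.as_sum, map_sum]
        exact M.sum_mem fun t ht => hmonomial t ((hdegree t ht).trans_lt hn) _
      · have hp_mem : p ∈ idealOfVars ι R ^ d :=
          (mem_pow_idealOfVars_iff d p).mpr fun t ht => hn.trans_eq (hdegree t ht).symm
        rw [← homogeneousComponent_eq_self hp]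
        exact mk_homogeneousComponent_mem hJ hL he M hLM ih (hd hp_mem)
  obtain ⟨p, rfl⟩ := Ideal.Quotient.mk_surjective b
  rw [← sum_homogeneousComponent p, map_sum]
  exact M.sum_mem fun n _ => hhomogeneous n _ (homogeneousComponent_isHomogeneous n p)

lemma finite_aeval_mk_of_pow_idealOfVars_le [Finite ι] {κ : Type*} {J : Ideal (MvPolynomial ι R)}
    (hJ : J.IsHomogeneous (homogeneousSubmodule ι R)) {L : κ → MvPolynomial ι R} {e : κ → ℕ}
    (hL : ∀ i, (L i).IsHomogeneous (e i)) (he : ∀ i, e i ≠ 0) {d : ℕ}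
    (hd : idealOfVars ι R ^ d ≤ J ⊔ Ideal.span (Set.range L)) :
    (aeval fun i => Ideal.Quotient.mk J (L i) :
      MvPolynomial κ R →ₐ[R] MvPolynomial ι R ⧸ J).Finite := by
  set φ : MvPolynomial κ R →ₐ[R] MvPolynomial ι R ⧸ J := aeval fun i => Ideal.Quotient.mk J (L i)
  algebraize [φ.toRingHom]
  let B : Set (ι →₀ ℕ) := {t | t.degree < d}
  have hB : B.Finite := (Finsupp.finite_of_degree_le d).subset
    fun t (ht : t.degree < d) => show t.degree ≤ d from ht.le
  let M : Submodule (MvPolynomial κ R) (MvPolynomial ι R ⧸ J) :=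
    Submodule.span _ ((fun t => Ideal.Quotient.mk J (monomial t 1)) '' B)
  have hLM : ∀ i, ∀ b ∈ M, Ideal.Quotient.mk J (L i) * b ∈ M := fun i b hb => by
    have : (X i : MvPolynomial κ R) • b = Ideal.Quotient.mk J (L i) * b := by
      rw [Algebra.smul_def]
      exact congrArg (· * b) (aeval_X _ i)
    exact this ▸ M.smul_mem _ hb
  have hmonomial : ∀ t ∈ B, ∀ c : R, Ideal.Quotient.mk J (monomial t c) ∈ M := fun t ht c => by
    have : (C c : MvPolynomial κ R) • Ideal.Quotient.mk J (monomial t 1) =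
        Ideal.Quotient.mk J (monomial t c) := by
      rw [show monomial t c = C c * monomial t 1 by rw [C_mul_monomial, mul_one], map_mul,
        Algebra.smul_def]
      exact congrArg (· * _) (aeval_C _ c)
    exact this ▸ M.smul_mem _ (Submodule.subset_span ⟨t, ht, rfl⟩)
  suffices Module.Finite (MvPolynomial κ R) (MvPolynomial ι R ⧸ J) from this
  have hM : M = ⊤ := eq_top_iff.mpr fun b _ =>
    mk_mem_of_pow_idealOfVars_le hJ hL he hd M.toAddSubmonoid hLM hmonomial b
  exact Module.finite_def.mpr (hM ▸ Submodule.fg_span (hB.image _))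

lemma exists_sub_one_mem_and_forall_C_mul_mem [Finite ι] {I : Ideal (MvPolynomial ι R)}
    (hI : I.IsHomogeneous (homogeneousSubmodule ι R)) {𝔪 : Ideal R} {d : ℕ}
    (hd : idealOfVars ι R ^ d ≤ I ⊔ 𝔪.map C) :
    ∃ r : R, r - 1 ∈ 𝔪 ∧ ∀ p : MvPolynomial ι R, p.IsHomogeneous d → C r * p ∈ I := by
  have hle : homogeneousSubmodule ι R d ≤
      I.restrictScalars R ⊔ 𝔪 • homogeneousSubmodule ι R d := by
    intro p hp
    have hp_mem : p ∈ idealOfVars ι R ^ d := (mem_pow_idealOfVars_iff d p).mpr fun t ht => by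
      rw [Finsupp.degree_eq_weight_one]
      exact (hp (mem_support_iff.mp ht)).ge
    obtain ⟨a, ha, b, hb, hab⟩ := Submodule.mem_sup.mp (hd hp_mem)
    rw [← homogeneousComponent_eq_self hp, ← hab, map_add]
    refine Submodule.add_mem_sup (homogeneousComponent_mem_of_mem hI ha d) ?_
    rw [homogeneousComponent_apply]
    refine Submodule.sum_mem _ fun t ht => ?_
    rw [← mul_one (coeff t b), ← smul_eq_mul, ← smul_monomial]
    exact Submodule.smul_mem_smul (mem_map_C_iff.mp hb t)
      (isHomogeneous_monomial 1 (Finset.mem_filter.mp ht).2)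
  obtain ⟨r, hr, hrI⟩ := Submodule.exists_sub_one_mem_and_smul_le_of_fg_of_le_sup
    (homogeneousSubmodule_fg ι R d) le_rfl hle
  refine ⟨r, hr, fun p hp => ?_⟩
  rw [← smul_eq_C_mul]
  exact hrI (Submodule.smul_mem_pointwise_smul p r _ hp)

end Homogeneous

lemma ringKrullDim_le_of_isIntegral {R S : Type*} [CommRing R] [CommRing S] {f : R →+* S}
    (hf : f.IsIntegral) : ringKrullDim S ≤ ringKrullDim R := by
  algebraize [f]
  exact Order.krullDim_le_of_strictMono (PrimeSpectrum.comap (algebraMap R S)) fun _ _ h =>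
    Ideal.IsIntegral.comap_lt_comap h

section Nullstellensatz

variable {K ι : Type*} [Field K] [IsAlgClosed K] [Finite ι]

attribute [local instance] MvPolynomial.gradedAlgebra

lemma exists_pow_idealOfVars_le_of_zeroLocus_subset {I : Ideal (MvPolynomial ι K)}
    (hI : zeroLocus K I ⊆ {0}) : ∃ d, idealOfVars ι K ^ d ≤ I := by
  refine Ideal.exists_pow_le_of_le_radical_of_fg ?_ (idealOfVars_fg ι K)
  rw [← vanishingIdeal_zeroLocus_eq_radical (K := K), idealOfVars, Ideal.span_le]
  rintro _ ⟨i, rfl⟩ v hv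
  simp [Set.mem_singleton_iff.mp (hI hv)]

lemma ringKrullDim_quotient_le_card {κ : Type*} [Finite κ] {J : Ideal (MvPolynomial ι K)}
    (hJ : J.IsHomogeneous (homogeneousSubmodule ι K)) {L : κ → MvPolynomial ι K} {e : κ → ℕ}
    (hL : ∀ i, (L i).IsHomogeneous (e i)) (he : ∀ i, e i ≠ 0)
    (hzero : zeroLocus K (J ⊔ Ideal.span (Set.range L)) ⊆ {0}) :
    ringKrullDim (MvPolynomial ι K ⧸ J) ≤ Nat.card κ := by
  obtain ⟨d, hd⟩ := exists_pow_idealOfVars_le_of_zeroLocus_subset hzero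
  have hfinite := finite_aeval_mk_of_pow_idealOfVars_le hJ hL he hd
  calc ringKrullDim (MvPolynomial ι K ⧸ J)
      ≤ ringKrullDim (MvPolynomial κ K) :=
        ringKrullDim_le_of_isIntegral (RingHom.Finite.to_isIntegral hfinite)
    _ = Nat.card κ := by
      rw [MvPolynomial.ringKrullDim_of_isNoetherianRing, ringKrullDim_eq_zero_of_field, zero_add]

lemma exists_ne_zero_and_forall_zeroLocus_map_subset {A : Type*} [CommRing A]
    {I : Ideal (MvPolynomial ι A)} (hI : I.IsHomogeneous (homogeneousSubmodule ι A))
    {φ₀ : A →+* K} (hφ₀ : Function.Surjective φ₀) (hzero : zeroLocus K (I.map (map φ₀)) ⊆ {0}) :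
    ∃ r : A, φ₀ r ≠ 0 ∧ ∀ φ : A →+* K, φ r ≠ 0 → zeroLocus K (I.map (map φ)) ⊆ {0} := by
  obtain ⟨d, hd⟩ := exists_pow_idealOfVars_le_of_zeroLocus_subset hzero
  have hd' : idealOfVars ι A ^ d ≤ I ⊔ (RingHom.ker φ₀).map C := by
    rw [← MvPolynomial.ker_map, RingHom.ker_eq_comap_bot,
      ← Ideal.comap_map_of_surjective _ (map_surjective φ₀ hφ₀), ← Ideal.map_le_iff_le_comap,
      Ideal.map_pow]
    refine le_trans (Ideal.pow_right_mono ?_ d) hd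
    rw [idealOfVars, Ideal.map_span, Ideal.span_le]
    rintro _ ⟨_, ⟨i, rfl⟩, rfl⟩
    rw [map_X]
    exact Ideal.subset_span ⟨i, rfl⟩
  obtain ⟨r, hr, hrI⟩ := exists_sub_one_mem_and_forall_C_mul_mem hI hd'
  have hφ₀r : φ₀ r = 1 := by rwa [RingHom.mem_ker, map_sub, map_one, sub_eq_zero] at hr
  refine ⟨r, hφ₀r ▸ one_ne_zero, fun φ hφ v hv => funext fun i => ?_⟩
  have hpow := hv _ (Ideal.mem_map_of_mem (map φ) (hrI _ (isHomogeneous_X_pow i d)))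
  simp only [map_mul, map_C, map_pow, map_X, aeval_X, aeval_C, Algebra.algebraMap_self,
    RingHom.id_apply, mul_eq_zero, hφ, false_or] at hpow
  exact eq_zero_of_pow_eq_zero hpow

end Nullstellensatz
section KrullDimension

open TopologicalSpace Topology

variable {T U : Type*} [TopologicalSpace T] [TopologicalSpace U]

lemma isIrreducible_of_image_of_isInducing {f : T → U} (hf : IsInducing f) {s : Set T}
    (h : IsIrreducible (f '' s)) : IsIrreducible s := by
  refine ⟨h.nonempty.of_image, fun u v hu hv hsu hsv => ?_⟩
  obtain ⟨u', hu', rfl⟩ := hf.isOpen_iff.mp hu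
  obtain ⟨v', hv', rfl⟩ := hf.isOpen_iff.mp hv
  rw [← Set.image_inter_nonempty_iff] at hsu hsv
  rw [← Set.preimage_inter, ← Set.image_inter_nonempty_iff]
  exact h.isPreirreducible u' v' hu' hv' hsu hsv

lemma topologicalKrullDim_le_iff_forall_height_le {C : Set T} (hC : IsClosed C) {n : ℕ∞} :
    topologicalKrullDim C ≤ n ↔
      ∀ W : IrreducibleCloseds T, (W : Set T) ⊆ C → Order.height W ≤ n := by
  refine ⟨fun h W hWC => ?_, fun h => ?_⟩
  · have hsub : ∀ V : Set.Iic W, (V : Set T) ⊆ C := fun V => le_trans V.2 hWC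
    let restrict (V : Set.Iic W) : IrreducibleCloseds C :=
      { carrier := Subtype.val ⁻¹' (V : Set T)
        isIrreducible' := isIrreducible_of_image_of_isInducing IsInducing.subtypeVal <| by
          rw [Subtype.image_preimage_coe, Set.inter_eq_right.mpr (hsub V)]
          exact V.1.isIrreducible
        isClosed' := V.1.isClosed.preimage continuous_subtype_val }
    have hrestrict : StrictMono restrict := fun V V' hlt =>
      ⟨fun x hx => hlt.le hx, fun hge => hlt.not_ge fun x hx => @hge ⟨x, hsub V' hx⟩ hx⟩
    rw [← WithBot.coe_le_coe, Order.height_eq_krullDim_Iic]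
    exact (Order.krullDim_le_of_strictMono restrict hrestrict).trans h
  · rw [topologicalKrullDim, Order.krullDim_eq_iSup_height]
    refine iSup_le fun V => WithBot.coe_le_coe.mpr ?_
    refine (Order.height_le_height_apply_of_strictMono _
      (IrreducibleCloseds.map_strictMono_of_isInducing IsInducing.subtypeVal) V).trans (h _ ?_)
    exact closure_minimal (Subtype.coe_image_subset C V) hC

variable [NoetherianSpace T]

lemma exists_finite_irreducibleCloseds_forall_le {C : Set T} (hC : IsClosed C) :
    ∃ S : Set (IrreducibleCloseds T), S.Finite ∧ (∀ Z ∈ S, (Z : Set T) ⊆ C) ∧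
      ∀ W : IrreducibleCloseds T, (W : Set T) ⊆ C → ∃ Z ∈ S, W ≤ Z := by
  obtain ⟨S, hS, hclosed, hirreducible, rfl⟩ :=
    NoetherianSpace.exists_finite_set_isClosed_irreducible hC
  refine ⟨{Z | (Z : Set T) ∈ S}, hS.preimage SetLike.coe_injective.injOn,
    fun Z hZ => Set.subset_sUnion_of_mem hZ, fun W hW => ?_⟩
  obtain ⟨Z, hZ, hWZ⟩ := isIrreducible_iff_sUnion_isClosed.mp W.isIrreducible hS.toFinset
    (fun Z hZ => hclosed Z (hS.mem_toFinset.mp hZ)) (by rwa [hS.coe_toFinset])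
  rw [hS.mem_toFinset] at hZ
  exact ⟨⟨Z, hirreducible Z hZ, hclosed Z hZ⟩, hZ, hWZ⟩

lemma finite_of_topologicalKrullDim_le_zero [T1Space T] {C : Set T} (hC : IsClosed C)
    (hdim : topologicalKrullDim C ≤ ((0 : ℕ∞) : WithBot ℕ∞)) : C.Finite := by
  obtain ⟨S, hS, hSC, hSW⟩ := exists_finite_irreducibleCloseds_forall_le hC
  rw [topologicalKrullDim_le_iff_forall_height_le hC] at hdim
  refine (hS.preimage IrreducibleCloseds.singleton_injective.injOn).subset fun x hx => ?_
  obtain ⟨Z, hZ, hxZ⟩ := hSW {x} (Set.singleton_subset_iff.mpr hx)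
  have hZ_min : IsMin Z := Order.height_eq_zero.mp (nonpos_iff_eq_zero.mp (hdim Z (hSC Z hZ)))
  exact Set.mem_preimage.mpr (hZ_min.eq_of_le hxZ ▸ hZ)

end KrullDimension

section ZariskiTopology

open TopologicalSpace Topology

attribute [local instance] zariskiTopology

variable {k} {ι : Type}

lemma isClosed_iff_exists_forall_eval_eq_zero {Z : Set (ι → k)} :
    IsClosed Z ↔ ∃ S : Set (MvPolynomial ι k), Z = {v | ∀ p ∈ S, eval v p = 0} := by
  rw [← isOpen_compl_iff]
  change Zᶜᶜ ∈ _ ↔ _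
  rw [compl_compl]
  rfl

lemma isClosed_setOf_eval_eq_zero (p : MvPolynomial ι k) : IsClosed {v : ι → k | eval v p = 0} :=
  isClosed_iff_exists_forall_eval_eq_zero.mpr ⟨{p}, by simp⟩

instance t1Space_zariskiTopology : T1Space (ι → k) where
  t1 a := isClosed_iff_exists_forall_eval_eq_zero.mpr
    ⟨Set.range fun i => X i - C (a i), by ext v; simp [sub_eq_zero, funext_iff]⟩

lemma zeroLocus_vanishingIdeal_of_isClosed {Z : Set (ι → k)} (hZ : IsClosed Z) :
    zeroLocus k (vanishingIdeal k Z) = Z := by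
  refine Set.Subset.antisymm (fun v hv => ?_) (zeroLocus_vanishingIdeal_le Z)
  obtain ⟨S, rfl⟩ := isClosed_iff_exists_forall_eval_eq_zero.mp hZ
  exact fun p hp => hv p fun w hw => hw p hp

lemma vanishingIdeal_lt_vanishingIdeal {Z Z' : Set (ι → k)} (hZ : IsClosed Z) (h : Z ⊂ Z') :
    vanishingIdeal k Z' < vanishingIdeal k Z := by
  refine lt_of_le_not_ge (vanishingIdeal_anti_mono h.le) fun hge => h.not_ge ?_
  rw [← zeroLocus_vanishingIdeal_of_isClosed hZ]
  exact le_zeroLocus_iff_le_vanishingIdeal.mpr hge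

instance noetherianSpace_zariskiTopology [Finite ι] : NoetherianSpace (ι → k) := by
  refine ((noetherianSpace_TFAE (ι → k)).out 0 1).mpr (StrictMono.wellFoundedLT
    (f := fun Z : Closeds (ι → k) => OrderDual.toDual (vanishingIdeal k (Z : Set (ι → k)))) ?_)
  exact fun Z Z' h => vanishingIdeal_lt_vanishingIdeal Z.isClosed h

lemma isPrime_vanishingIdeal_of_isIrreducible {Z : Set (ι → k)} (hZ : IsIrreducible Z) :
    (vanishingIdeal k Z).IsPrime := by
  refine Ideal.isPrime_iff.mpr ⟨fun htop => ?_, fun {p q} hpq => ?_⟩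
  · obtain ⟨v, hv⟩ := hZ.nonempty
    simpa using (Ideal.eq_top_iff_one _).mp htop v hv
  · have hsub : Z ⊆ {v | eval v p = 0} ∪ {v | eval v q = 0} := fun v hv => by
      simpa using hpq v hv
    exact isPreirreducible_iff_isClosed_union_isClosed.mp hZ.isPreirreducible _ _
      (isClosed_setOf_eval_eq_zero p) (isClosed_setOf_eval_eq_zero q) hsub

lemma topologicalKrullDim_le_ringKrullDim_quotient_vanishingIdeal (C : Set (ι → k)) :
    topologicalKrullDim C ≤ ringKrullDim (MvPolynomial ι k ⧸ vanishingIdeal k C) := by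
  let W (Z : IrreducibleCloseds C) : IrreducibleCloseds (ι → k) :=
    Z.map Subtype.val continuous_subtype_val
  have hW : StrictMono W := IrreducibleCloseds.map_strictMono_of_isInducing IsInducing.subtypeVal
  have hle : ∀ Z, vanishingIdeal k C ≤ vanishingIdeal k (W Z : Set (ι → k)) := fun Z p hp =>
    closure_minimal (fun v hv => hp v (Subtype.coe_image_subset C Z hv))
      (isClosed_setOf_eval_eq_zero p)
  let P (Z : IrreducibleCloseds C) :
      PrimeSpectrum.zeroLocus (vanishingIdeal k C : Set (MvPolynomial ι k)) :=
    ⟨⟨_, isPrime_vanishingIdeal_of_isIrreducible (W Z).isIrreducible⟩, hle Z⟩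
  have hP : StrictMono fun Z => OrderDual.toDual (P Z) := fun Z Z' h =>
    vanishingIdeal_lt_vanishingIdeal (W Z).isClosed (hW h)
  rw [ringKrullDim_quotient, ← Order.krullDim_orderDual]
  exact Order.krullDim_le_of_strictMono _ hP

end ZariskiTopology

section Cones

attribute [local instance] zariskiTopology MvPolynomial.gradedAlgebra

variable {k} {ι : Type} {C : Set (ι → k)}

/-- The polynomials `L i` have no common zero on `C` other than the origin. A closed cone has
dimension at most `N` exactly when some `N` linear forms isolate the origin in it. -/
def IsolatesOrigin {κ : Type*} (L : κ → MvPolynomial ι k) (C : Set (ι → k)) : Prop :=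
  ∀ v ∈ C, (∀ i, eval v (L i) = 0) → v = 0

lemma isHomogeneous_vanishingIdeal [Infinite k] (hcone : ∀ c : k, ∀ v ∈ C, c • v ∈ C) :
    (vanishingIdeal k C).IsHomogeneous (homogeneousSubmodule ι k) := by
  intro n p hp
  have hcomponent : homogeneousComponent n p ∈ vanishingIdeal k C := fun v hv =>
    forall_eval_smul_eq_zero_iff.mp (fun c => hp _ (hcone c v hv)) n
  rwa [← decomposition.decompose'_apply] at hcomponent

lemma topologicalKrullDim_le_card_of_isolatesOrigin [IsAlgClosed k] [Finite ι] (hC : IsClosed C)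
    (hcone : ∀ c : k, ∀ v ∈ C, c • v ∈ C) {κ : Type*} [Finite κ] {L : κ → MvPolynomial ι k}
    {e : κ → ℕ} (hL : ∀ i, (L i).IsHomogeneous (e i)) (he : ∀ i, e i ≠ 0)
    (hLC : IsolatesOrigin L C) : topologicalKrullDim C ≤ Nat.card κ := by
  refine (topologicalKrullDim_le_ringKrullDim_quotient_vanishingIdeal C).trans
    (ringKrullDim_quotient_le_card (isHomogeneous_vanishingIdeal hcone) hL he fun v hv => ?_)
  have hvC : v ∈ C := by
    rw [← zeroLocus_vanishingIdeal_of_isClosed hC]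
    exact zeroLocus_anti_mono le_sup_left hv
  exact hLC v hvC fun i => zeroLocus_anti_mono le_sup_right hv (L i) (Ideal.subset_span ⟨i, rfl⟩)

lemma exists_isHomogeneous_one_forall_eval_ne_zero [Infinite k] [Finite ι] {α : Type*} [Finite α]
    {w : α → ι → k} (hw : ∀ a, w a ≠ 0) :
    ∃ L : MvPolynomial ι k, L.IsHomogeneous 1 ∧ ∀ a, eval (w a) L ≠ 0 := by
  classical
  have := Fintype.ofFinite ι
  obtain ⟨f, hf⟩ := Module.exists_dual_forall_apply_ne_zero (K := k) w hw
  obtain ⟨c, rfl⟩ := (dotProductEquiv k ι).surjective f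
  refine ⟨∑ i, C (c i) * X i, IsHomogeneous.sum _ _ _ fun i _ => isHomogeneous_C_mul_X _ _,
    fun a => ?_⟩
  simpa [dotProduct] using hf a

lemma exists_isHomogeneous_one_topologicalKrullDim_inter_le [Infinite k] [Finite ι]
    (hC : IsClosed C) {n : ℕ∞} (hdim : topologicalKrullDim C ≤ ((n + 1 : ℕ∞) : WithBot ℕ∞)) :
    ∃ L : MvPolynomial ι k, L.IsHomogeneous 1 ∧
      topologicalKrullDim ↥(C ∩ {v | eval v L = 0}) ≤ n := by
  obtain ⟨S, hS, hSC, hSW⟩ := exists_finite_irreducibleCloseds_forall_le hC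
  have hnonzero : ∀ Z : {Z ∈ S | ¬ Z ≤ {0}}, ∃ v ∈ Z.1, v ≠ 0 := fun Z =>
    Set.not_subset.mp Z.2.2
  choose w hwZ hw using hnonzero
  have : Finite {Z ∈ S | ¬ Z ≤ {0}} := hS.sep _
  obtain ⟨L, hL, hLw⟩ := exists_isHomogeneous_one_forall_eval_ne_zero hw
  refine ⟨L, hL, ?_⟩
  rw [topologicalKrullDim_le_iff_forall_height_le (hC.inter (isClosed_setOf_eval_eq_zero L))]
  rw [topologicalKrullDim_le_iff_forall_height_le hC] at hdim
  intro W hW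
  obtain ⟨Z, hZ, hWZ⟩ := hSW W (hW.trans Set.inter_subset_left)
  by_cases hZ_zero : Z ≤ {0}
  · have hW_min : IsMin W := fun V hVW x hx => by
      obtain ⟨y, hy⟩ := V.isIrreducible.nonempty
      have hx_zero : x = 0 := hZ_zero (hWZ hx)
      have hy_zero : y = 0 := hZ_zero (hWZ (hVW hy))
      exact hx_zero.trans hy_zero.symm ▸ hy
    exact (Order.height_eq_zero.mpr hW_min).le.trans bot_le
  · have hlt : W < Z := lt_of_le_not_ge hWZ fun hZW =>
      hLw ⟨Z, hZ, hZ_zero⟩ (hW (hZW (hwZ ⟨Z, hZ, hZ_zero⟩))).2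
    exact (ENat.add_le_add_iff_right ENat.one_ne_top).mp
      ((Order.height_add_one_le hlt).trans (hdim Z (hSC Z hZ)))

lemma exists_isolatesOrigin_of_topologicalKrullDim_le [Infinite k] [Finite ι] (hC : IsClosed C)
    (hcone : ∀ c : k, ∀ v ∈ C, c • v ∈ C) {N : ℕ}
    (hdim : topologicalKrullDim C ≤ ((N : ℕ∞) : WithBot ℕ∞)) :
    ∃ L : Fin N → MvPolynomial ι k, (∀ i, (L i).IsHomogeneous 1) ∧ IsolatesOrigin L C := by
  induction N generalizing C with
  | zero =>
    refine ⟨Fin.elim0, fun i => i.elim0, fun v hv _ => by_contra fun hv_zero => ?_⟩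
    exact Set.infinite_of_injective_forall_mem (smul_left_injective k hv_zero)
      (fun c => hcone c v hv) (finite_of_topologicalKrullDim_le_zero hC hdim)
  | succ N ih =>
    obtain ⟨L₀, hL₀, hdim₀⟩ := exists_isHomogeneous_one_topologicalKrullDim_inter_le hC
      (n := N) (by exact_mod_cast hdim)
    obtain ⟨L, hL, hLC⟩ := ih (hC.inter (isClosed_setOf_eval_eq_zero L₀))
      (fun c v hv => ⟨hcone c v hv.1, by
        rw [Set.mem_ofPred_eq, eval_smul_of_isHomogeneous hL₀, hv.2, mul_zero]⟩) hdim₀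
    exact ⟨Fin.cons L₀ L, Fin.cases hL₀ hL, fun v hv hv_zero =>
      hLC v ⟨hv, hv_zero 0⟩ fun i => hv_zero i.succ⟩

theorem topologicalKrullDim_le_iff_exists_isolatesOrigin [IsAlgClosed k] [Finite ι]
    (hC : IsClosed C) (hcone : ∀ c : k, ∀ v ∈ C, c • v ∈ C) (N : ℕ) :
    topologicalKrullDim C ≤ ((N : ℕ∞) : WithBot ℕ∞) ↔
      ∃ L : Fin N → MvPolynomial ι k, (∀ i, (L i).IsHomogeneous 1) ∧ IsolatesOrigin L C := by
  refine ⟨exists_isolatesOrigin_of_topologicalKrullDim_le hC hcone, fun ⟨L, hL, hLC⟩ => ?_⟩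
  simpa using topologicalKrullDim_le_card_of_isolatesOrigin hC hcone hL
    (fun _ => one_ne_zero) hLC

end Cones

section Elimination

attribute [local instance] zariskiTopology MvPolynomial.gradedAlgebra

variable {k} {σ ι : Type}

/-- A polynomial in two blocks of variables, viewed as a polynomial in the second block whose
coefficients are polynomials in the first. -/
def separateVars {R σ ι : Type*} [CommSemiring R] :
    MvPolynomial (σ ⊕ ι) R →ₐ[R] MvPolynomial ι (MvPolynomial σ R) :=
  (sumAlgEquiv R ι σ).toAlgHom.comp (rename Sum.swap)

lemma eval_map_eval_separateVars {R σ ι : Type*} [CommSemiring R] (u : σ → R) (v : ι → R)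
    (p : MvPolynomial (σ ⊕ ι) R) :
    eval v (map (eval u) (separateVars p)) = eval (Sum.elim u v) p := by
  induction p using MvPolynomial.induction_on with
  | C a => simp [separateVars, MvPolynomial.algebraMap_apply]
  | add p q hp hq => simp only [map_add, hp, hq]
  | mul_X p i hp =>
    rw [map_mul, map_mul, map_mul, map_mul, hp]
    cases i <;> simp [separateVars]

lemma isClosed_setOf_forall_eval_elim_eq_zero (S : Set (MvPolynomial (σ ⊕ ι) k)) (u : σ → k) :
    IsClosed {v : ι → k | ∀ p ∈ S, eval (Sum.elim u v) p = 0} :=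
  isClosed_iff_exists_forall_eval_eq_zero.mpr
    ⟨(fun p => map (eval u) (separateVars p)) '' S, by
      simp only [Set.forall_mem_image, eval_map_eval_separateVars]⟩

/-- The largest subset of `C` stable under multiplication by scalars. The fibres of interest are
cones, and equal to their cone cores, only over the variety; with cone cores the conditions on
fibres make sense at every point of projective space. -/
def coneCore (C : Set (ι → k)) : Set (ι → k) :=
  {v | ∀ c : k, c • v ∈ C}

lemma coneCore_eq_self {C : Set (ι → k)} (hcone : ∀ c : k, ∀ v ∈ C, c • v ∈ C) :
    coneCore C = C :=
  Set.ext fun v => ⟨fun h => one_smul k v ▸ h 1, fun h c => hcone c v h⟩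

/-- The ideal, with parameters in `MvPolynomial σ k`, generated by the homogeneous components of
the polynomials in `S` and by the forms `L i`. Specialised at `u`, it cuts out the common zeros of
the `L i` on the cone core of the fibre over `u`. -/
def coneCoreIdeal {κ : Type*} (S : Set (MvPolynomial (σ ⊕ ι) k)) (L : κ → MvPolynomial ι k) :
    Ideal (MvPolynomial ι (MvPolynomial σ k)) :=
  Ideal.span ({q | ∃ p ∈ S, ∃ n, homogeneousComponent n (separateVars p) = q} ∪
    Set.range fun i => map C (L i))

lemma isHomogeneous_coneCoreIdeal {κ : Type*} (S : Set (MvPolynomial (σ ⊕ ι) k))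
    {L : κ → MvPolynomial ι k} {e : κ → ℕ} (hL : ∀ i, (L i).IsHomogeneous (e i)) :
    (coneCoreIdeal S L).IsHomogeneous (homogeneousSubmodule ι (MvPolynomial σ k)) := by
  refine Ideal.homogeneous_span _ _ ?_
  rintro _ (⟨p, -, n, rfl⟩ | ⟨i, rfl⟩)
  · exact ⟨n, homogeneousComponent_isHomogeneous n _⟩
  · exact ⟨e i, (hL i).map C⟩

lemma zeroLocus_map_coneCoreIdeal [Infinite k] {κ : Type*} (S : Set (MvPolynomial (σ ⊕ ι) k))
    (L : κ → MvPolynomial ι k) (u : σ → k) :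
    zeroLocus k ((coneCoreIdeal S L).map (map (eval u))) =
      {v | v ∈ coneCore {v | ∀ p ∈ S, eval (Sum.elim u v) p = 0} ∧ ∀ i, eval v (L i) = 0} := by
  have hconst : ∀ p : MvPolynomial ι k, map (eval u) (map C p) = p := fun p => by
    rw [map_map, show (eval u).comp C = RingHom.id k from RingHom.ext (eval_C (f := u)), map_id]
  have hcomponents : ∀ v, v ∈ coneCore {v | ∀ p ∈ S, eval (Sum.elim u v) p = 0} ↔
      ∀ p ∈ S, ∀ n, eval v (map (eval u) (homogeneousComponent n (separateVars p))) = 0 :=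
    fun v => by
      simp only [map_homogeneousComponent, ← forall_eval_smul_eq_zero_iff,
        eval_map_eval_separateVars]
      exact ⟨fun h p hp c => h c p hp, fun h c p hp => h p hp c⟩
  ext v
  rw [Set.mem_ofPred_eq, hcomponents, coneCoreIdeal, Ideal.map_span, zeroLocus_span]
  simp only [Set.mem_ofPred_eq, Set.forall_mem_image]
  refine ⟨fun h => ⟨fun p hp n => h (Or.inl ⟨p, hp, n, rfl⟩), fun i => ?_⟩, ?_⟩
  · exact hconst (L i) ▸ h (Or.inr ⟨i, rfl⟩)
  · rintro ⟨hS, hL⟩ _ (⟨p, hp, n, rfl⟩ | ⟨i, rfl⟩)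
    · exact hS p hp n
    · exact (hconst (L i)).symm ▸ hL i

lemma isOpen_setOf_isolatesOrigin_coneCore [IsAlgClosed k] [Finite ι] {κ : Type*}
    (S : Set (MvPolynomial (σ ⊕ ι) k)) {L : κ → MvPolynomial ι k} {e : κ → ℕ}
    (hL : ∀ i, (L i).IsHomogeneous (e i)) :
    IsOpen {u : σ → k |
      IsolatesOrigin L (coneCore {v | ∀ p ∈ S, eval (Sum.elim u v) p = 0})} := by
  have hiff : ∀ u, IsolatesOrigin L (coneCore {v | ∀ p ∈ S, eval (Sum.elim u v) p = 0}) ↔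
      zeroLocus k ((coneCoreIdeal S L).map (map (eval u))) ⊆ {0} := fun u => by
    rw [zeroLocus_map_coneCoreIdeal]
    exact ⟨fun h v hv => h v hv.1 hv.2, fun h v hv hv_zero => h ⟨hv, hv_zero⟩⟩
  simp only [hiff]
  refine isOpen_iff_forall_mem_open.mpr fun u₀ hu₀ => ?_
  obtain ⟨r, hr₀, hr⟩ := exists_ne_zero_and_forall_zeroLocus_map_subset
    (isHomogeneous_coneCoreIdeal S hL) (fun c => ⟨C c, eval_C c⟩) hu₀
  exact ⟨{u | eval u r = 0}ᶜ, fun u hu => hr (eval u) hu,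
    (isClosed_setOf_eval_eq_zero r).isOpen_compl, hr₀⟩

end Elimination

section Projective

attribute [local instance] zariskiTopology

variable {k} {n : ℕ} {ι : Type}

lemma exists_forall_mk'_mem_iff_of_isClosed {F : Set (ℙ k (Fin (n + 1) → k) × (ι → k))}
    (hF : @IsClosed _ (projProdTopology k n ι) F) :
    ∃ S : Set (MvPolynomial (Fin (n + 1) ⊕ ι) k),
      ∀ (u : {u : Fin (n + 1) → k // u ≠ 0}) (v : ι → k),
        (Projectivization.mk' k u, v) ∈ F ↔ ∀ p ∈ S, eval (Sum.elim u.1 v) p = 0 := by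
  obtain ⟨Z, hZ, hZF⟩ := isClosed_induced_iff.mp (isClosed_coinduced.mp hF)
  obtain ⟨S, rfl⟩ := isClosed_iff_exists_forall_eval_eq_zero.mp hZ
  exact ⟨S, fun u v => (Set.ext_iff.mp hZF (u, v)).symm⟩

lemma isClosed_setOf_mk_mem_of_isClosed {F : Set (ℙ k (Fin (n + 1) → k) × (ι → k))}
    (hF : @IsClosed _ (projProdTopology k n ι) F) (x : ℙ k (Fin (n + 1) → k)) :
    IsClosed {v : ι → k | (x, v) ∈ F} := by
  obtain ⟨S, hS⟩ := exists_forall_mk'_mem_iff_of_isClosed hF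
  have hx : Projectivization.mk' k ⟨x.rep, x.rep_nonzero⟩ = x := by
    rw [Projectivization.mk'_eq_mk, x.mk_rep]
  rw [← hx]
  simp only [hS]
  exact isClosed_setOf_forall_eval_elim_eq_zero S x.rep

lemma isOpen_setOf_isolatesOrigin_coneCore_fibre [IsAlgClosed k] [Finite ι] {κ : Type*}
    {F : Set (ℙ k (Fin (n + 1) → k) × (ι → k))} (hF : @IsClosed _ (projProdTopology k n ι) F)
    {L : κ → MvPolynomial ι k} {e : κ → ℕ} (hL : ∀ i, (L i).IsHomogeneous (e i)) :
    IsOpen {x : ℙ k (Fin (n + 1) → k) | IsolatesOrigin L (coneCore {v | (x, v) ∈ F})} := by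
  obtain ⟨S, hS⟩ := exists_forall_mk'_mem_iff_of_isClosed hF
  refine isOpen_coinduced.mpr (isOpen_induced_iff.mpr
    ⟨_, isOpen_setOf_isolatesOrigin_coneCore S hL, ?_⟩)
  simp only [Set.preimage_ofPred_eq, hS]

end Projective

theorem dim_cone_fibres_upperSemicontinuous_general [IsAlgClosed k] (n : ℕ) (ι : Type) [Finite ι]
    (X : Set (ℙ k (Fin (n + 1) → k))) (F : Set (ℙ k (Fin (n + 1) → k) × (ι → k)))
    (hFclosed : ∃ F' : Set (ℙ k (Fin (n + 1) → k) × (ι → k)),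
      @IsClosed _ (projProdTopology k n ι) F' ∧ F = F' ∩ (X ×ˢ Set.univ))
    (hcone : ∀ x ∈ X, ∀ (c : k) (v : ι → k), (x, v) ∈ F → (x, c • v) ∈ F) :
    ∀ N : ℕ, IsOpen {x : X |
      @topologicalKrullDim {v : ι → k // ((x : ℙ k (Fin (n + 1) → k)), v) ∈ F}
          ((zariskiTopology k ι).induced Subtype.val)
        ≤ ((N : ℕ∞) : WithBot ℕ∞)} := by
  intro N
  let _ := zariskiTopology k ι
  obtain ⟨F', hF', rfl⟩ := hFclosed
  have hO : IsOpen (⋃ L ∈ {L : Fin N → MvPolynomial ι k | ∀ i, (L i).IsHomogeneous 1},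
      {x | IsolatesOrigin L (coneCore {v | (x, v) ∈ F'})}) :=
    isOpen_biUnion fun L hL => isOpen_setOf_isolatesOrigin_coneCore_fibre hF' hL
  refine isOpen_induced_iff.mpr ⟨_, hO, Set.ext fun ⟨x, hx⟩ => ?_⟩
  have hfibre : {v | (x, v) ∈ F' ∩ (X ×ˢ Set.univ)} = {v | (x, v) ∈ F'} := by
    simp only [Set.mem_inter_iff, Set.mem_prod, hx, Set.mem_univ, and_self, and_true]
  have hfibre_cone : ∀ c : k, ∀ v ∈ {v | (x, v) ∈ F'}, c • v ∈ {v | (x, v) ∈ F'} :=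
    hfibre ▸ hcone x hx
  change _ ↔ topologicalKrullDim ↥{v | (x, v) ∈ F' ∩ (X ×ˢ Set.univ)} ≤ ((N : ℕ∞) : WithBot ℕ∞)
  rw [hfibre, topologicalKrullDim_le_iff_exists_isolatesOrigin
    (isClosed_setOf_mk_mem_of_isClosed hF' x) hfibre_cone]
  simp only [Set.mem_preimage, Set.mem_iUnion, Set.mem_ofPred_eq, exists_prop,
    coneCore_eq_self hfibre_cone]

/-- for a variety `X` (a locally closed subset of projective space; affine
space embeds as an open subset of projective space, so locally closed subsets of affine
space are also covered), a finite-dimensional vector space `V = (ι → k)` with its Zariski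
topology, and a closed subset `F` of `X × V` all of whose fibres `F_x` (`x ∈ X`) are cones,
the function `x ↦ dim F_x` is upper semicontinuous on `X`. -/
theorem dim_cone_fibres_upperSemicontinuous
    [IsAlgClosed k] (n : ℕ) (ι : Type) [Fintype ι]
    (X : Set (ℙ k (Fin (n + 1) → k))) (hX : IsLocallyClosed X)
    (F : Set (ℙ k (Fin (n + 1) → k) × (ι → k)))
    (hFsub : F ⊆ X ×ˢ (Set.univ : Set (ι → k)))
    (hFclosed : ∃ F' : Set (ℙ k (Fin (n + 1) → k) × (ι → k)),
      @IsClosed _ (projProdTopology k n ι) F' ∧ F = F' ∩ (X ×ˢ Set.univ))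
    (hcone : ∀ x ∈ X, (x, (0 : ι → k)) ∈ F ∧
      ∀ (c : k) (v : ι → k), (x, v) ∈ F → (x, c • v) ∈ F) :
    ∀ N : ℕ, IsOpen {x : X |
      @topologicalKrullDim {v : ι → k // ((x : ℙ k (Fin (n + 1) → k)), v) ∈ F}
          ((zariskiTopology k ι).induced Subtype.val)
        ≤ ((N : ℕ∞) : WithBot ℕ∞)} := by
  exact dim_cone_fibres_upperSemicontinuous_general k n ι X F hFclosed fun x hx => (hcone x hx).2

end Stmt9
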